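/- Let Ψ be a critical branching mechanism which is regularly varying at 0 with index γ ∈ (1,2]. Let (ν_t)_{t>0} be a family of nonzero finite Borel measures on (0,∞) such that φ(t,q) = ∫_{(0,∞)} (1 − e^{−qx}) ν_t(dx) satisfies ∂_t φ(t,q) = −Ψ(φ(t,q)) for all t > 0 and all q ∈ (0,∞], where φ(t,∞) := ν_t((0,∞)). Suppose there exist functions α, λ : (0,∞) → (0,∞) and a nonzero finite Borel measure ν̂ on (0,∞) such that for every bounded continuous f : (0,∞) → ℝ, α(t) ∫_{(0,∞)} f(λ(t) x) ν_t(dx) → ∫_{(0,∞)} f dν̂ as t → ∞. Then there exists ρ ∈ (0,1] such that for every t > 0 the mass distribution function x ↦ ∫_{(0,x]} y ν_t(dy) is regularly varying at infinity with index 1 − ρ, i.e. equals x^{1−ρ} L(t,x) where x ↦ L(t,x) is slowly varying at infinity. -/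

import Mathlib

open MeasureTheory Set Filter

noncomputable section

/-!
The primitive `G(u) = ∫_u^1 ds / Ψ(s)` linearises the flow: `G(φ(t, q)) = t + C(q)`, and the total
mass `m(t) = φ(t, ∞)` satisfies `G(m(t)) = t + const`. Near `0`, `G` is regularly varying with index
`1 - γ`, so the convergence `φ(t, q λ(t)) / m(t) → p(q)` becomes `C(q λ(t)) / t → p(q)^(1-γ) - 1`
with a strictly decreasing limit. Since `C` is monotone, this forces `C`, hence `G ∘ φ(t, ·)`, to be
regularly varying at `0`, and inverting `G` gives the same for `φ(t, ·)`, with an index `ρ`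
independent of `t`. By concavity of `φ(t, ·)` its derivative, the Laplace transform of
`y ν_t(dy)`, is regularly varying with index `ρ - 1`, and Karamata's Tauberian theorem concludes.
-/

open scoped Topology

section MonotoneLimits

variable {ι α β : Type*} {l : Filter ι} {f : ι → α → β} {g : α → β} {s : Set α} {a : α} {x : ι → α}
  [LinearOrder α] [TopologicalSpace α] [OrderTopology α] [DenselyOrdered α]
  [NoMinOrder α] [NoMaxOrder α] [LinearOrder β] [TopologicalSpace β] [OrderTopology β]

theorem tendsto_apply_of_antitoneOn (hs : s ∈ 𝓝 a) (hf : ∀ᶠ i in l, AntitoneOn (f i) s)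
    (hfg : ∀ b ∈ s, Tendsto (fun i => f i b) l (𝓝 (g b))) (hg : ContinuousAt g a)
    (hx : Tendsto x l (𝓝 a)) : Tendsto (fun i => f i (x i)) l (𝓝 (g a)) := by
  refine tendsto_order.2 ⟨fun c hc => ?_, fun c hc => ?_⟩
  · obtain ⟨z, ⟨hcz, hzs⟩, haz⟩ :=
      ((eventually_nhdsWithin_of_eventually_nhds
        ((hg.eventually (lt_mem_nhds hc)).and hs)).and (self_mem_nhdsWithin (s := Ioi a))).exists
    filter_upwards [hf, hx hs, hx.eventually (gt_mem_nhds haz),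
      (hfg z hzs).eventually (lt_mem_nhds hcz)] with i hfi hxs hxz hcf
    exact hcf.trans_le (hfi hxs hzs hxz.le)
  · obtain ⟨z, ⟨hcz, hzs⟩, haz⟩ :=
      ((eventually_nhdsWithin_of_eventually_nhds
        ((hg.eventually (gt_mem_nhds hc)).and hs)).and (self_mem_nhdsWithin (s := Iio a))).exists
    filter_upwards [hf, hx hs, hx.eventually (lt_mem_nhds haz),
      (hfg z hzs).eventually (gt_mem_nhds hcz)] with i hfi hxs hxz hcf
    exact (hfi hzs hxs hxz.le).trans_lt hcf

theorem tendsto_of_tendsto_apply_of_strictAntiOn (hs : s ∈ 𝓝 a)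
    (hf : ∀ᶠ i in l, AntitoneOn (f i) s)
    (hfg : ∀ b ∈ s, Tendsto (fun i => f i b) l (𝓝 (g b))) (hg : StrictAntiOn g s)
    (hxs : ∀ᶠ i in l, x i ∈ s) (hfx : Tendsto (fun i => f i (x i)) l (𝓝 (g a))) :
    Tendsto x l (𝓝 a) := by
  have has : a ∈ s := mem_of_mem_nhds hs
  refine tendsto_order.2 ⟨fun c hc => ?_, fun c hc => ?_⟩
  · obtain ⟨z, ⟨hcz, hzs⟩, hza⟩ :=
      ((eventually_nhdsWithin_of_eventually_nhds
        ((lt_mem_nhds hc).and hs)).and (self_mem_nhdsWithin (s := Iio a))).exists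
    filter_upwards [hf, hxs, hfx.eventually_lt (hfg z hzs) (hg hzs has hza)] with i hfi hxi hlt
    exact hcz.trans (lt_of_not_ge fun hxz => hlt.not_ge (hfi hxi hzs hxz))
  · obtain ⟨z, ⟨hcz, hzs⟩, haz⟩ :=
      ((eventually_nhdsWithin_of_eventually_nhds
        ((gt_mem_nhds hc).and hs)).and (self_mem_nhdsWithin (s := Ioi a))).exists
    filter_upwards [hf, hxs, (hfg z hzs).eventually_lt hfx (hg has hzs haz)] with i hfi hxi hlt
    exact (lt_of_not_ge fun hzx => hlt.not_ge (hfi hzs hxi hzx)).trans hcz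

end MonotoneLimits

section RegularVariation

theorem tendsto_mul_const_nhdsGT_zero {c : ℝ} (hc : 0 < c) :
    Tendsto (fun t => t * c) (𝓝[>] 0) (𝓝[>] 0) := by
  refine tendsto_nhdsWithin_iff.2 ⟨?_, ?_⟩
  · simpa using ((continuous_mul_const c).tendsto 0).mono_left nhdsWithin_le_nhds
  · filter_upwards [self_mem_nhdsWithin] with t ht using mul_pos ht hc

/-- Regular variation with index `ρ` of `f` along `l`, which is `𝓝[>] 0` for regular variation at
zero and `atTop` for regular variation at infinity. Positivity of `f` is not part of the
definition. -/
def RegularlyVarying (f : ℝ → ℝ) (ρ : ℝ) (l : Filter ℝ) : Prop :=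
  ∀ c : ℝ, 0 < c → Tendsto (fun t => f (t * c) / f t) l (𝓝 (c ^ ρ))

namespace RegularlyVarying

variable {f g : ℝ → ℝ} {ρ σ : ℝ} {l : Filter ℝ}

theorem eventually_ne (hf : RegularlyVarying f ρ l) : ∀ᶠ t in l, f t ≠ 0 := by
  have h := hf 1 one_pos
  rw [Real.one_rpow] at h
  filter_upwards [h.eventually_ne one_ne_zero] with t ht h0
  exact ht (by rw [h0, div_zero])

theorem mul (hf : RegularlyVarying f ρ l) (hg : RegularlyVarying g σ l) :
    RegularlyVarying (fun t => f t * g t) (ρ + σ) l := fun c hc => by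
  rw [Real.rpow_add hc]
  exact ((hf c hc).mul (hg c hc)).congr fun t => div_mul_div_comm ..

theorem rpow (r : ℝ) (hl : ∀ᶠ t in l, 0 < t) : RegularlyVarying (fun t => t ^ r) r l := by
  refine fun c hc => tendsto_const_nhds.congr' ?_
  filter_upwards [hl] with t ht
  rw [Real.mul_rpow ht.le hc.le, mul_div_cancel_left₀ _ (Real.rpow_pos_of_pos ht r).ne']

theorem of_tendsto_div {J : ℝ} (hg : RegularlyVarying g ρ l)
    (hl : ∀ c : ℝ, 0 < c → Tendsto (fun t => t * c) l l)
    (hfg : Tendsto (fun t => f t / g t) l (𝓝 J)) (hJ : J ≠ 0) : RegularlyVarying f ρ l := by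
  intro c hc
  have hlim := (((hfg.comp (hl c hc)).div hfg hJ).mul (hg c hc))
  rw [div_self hJ, one_mul] at hlim
  refine hlim.congr' ?_
  filter_upwards [hg.eventually_ne, (hl c hc).eventually hg.eventually_ne] with t ht htc
  simp only [Function.comp_apply, Pi.div_apply]
  field_simp

theorem comp_inv (hf : RegularlyVarying f ρ (𝓝[>] 0)) :
    RegularlyVarying (fun x => f x⁻¹) (-ρ) atTop := fun c hc => by
  have h := (hf c⁻¹ (inv_pos.2 hc)).comp tendsto_inv_atTop_nhdsGT_zero
  rw [Real.inv_rpow hc.le, ← Real.rpow_neg hc.le] at h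
  exact h.congr fun x => by simp only [Function.comp_apply, mul_inv]

theorem exists_slowlyVarying (hf : RegularlyVarying f ρ atTop) (hpos : ∀ᶠ x in atTop, 0 < f x) :
    ∃ L : ℝ → ℝ, (∀ᶠ x in atTop, 0 < L x) ∧
      (∀ c : ℝ, 0 < c → Tendsto (fun x => L (c * x) / L x) atTop (𝓝 1)) ∧
      ∀ x : ℝ, 0 < x → f x = x ^ ρ * L x := by
  refine ⟨fun x => f x * x ^ (-ρ), ?_, fun c hc => ?_, fun x hx => ?_⟩
  · filter_upwards [hpos, eventually_gt_atTop 0] with x hfx hx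
    positivity
  · have h := hf.mul (rpow (-ρ) (eventually_gt_atTop 0)) c hc
    rw [add_neg_cancel, Real.rpow_zero] at h
    exact h.congr fun x => by rw [mul_comm x c]
  · simp only [Real.rpow_neg hx.le]
    field_simp

theorem tendsto_div_iff_of_antitoneOn {ι : Type*} {k : Filter ι} {y z : ι → ℝ} {c : ℝ}
    (hf : RegularlyVarying f ρ (𝓝[>] 0)) (hρ : ρ < 0) (hanti : AntitoneOn f (Ioi 0))
    (hpos : ∀ᶠ t in 𝓝[>] 0, 0 < f t) (hy : Tendsto y k (𝓝[>] 0)) (hz : ∀ᶠ i in k, 0 < z i)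
    (hc : 0 < c) :
    Tendsto (fun i => f (z i) / f (y i)) k (𝓝 (c ^ ρ)) ↔
      Tendsto (fun i => z i / y i) k (𝓝 c) := by
  have hypos : ∀ᶠ i in k, 0 < y i := hy.eventually self_mem_nhdsWithin
  have heq : (fun i => f (z i) / f (y i)) =ᶠ[k] fun i => f (y i * (z i / y i)) / f (y i) := by
    filter_upwards [hypos] with i hi
    rw [mul_div_cancel₀ _ hi.ne']
  have hmono : ∀ᶠ i in k, AntitoneOn (fun x => f (y i * x) / f (y i)) (Ioi 0) := by
    filter_upwards [hypos, hy.eventually hpos] with i hi hfi u hu v hv huv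
    exact div_le_div_of_nonneg_right
      (hanti (mul_pos hi hu) (mul_pos hi hv) (by gcongr)) hfi.le
  have hlim : ∀ b ∈ Ioi (0 : ℝ), Tendsto (fun i => f (y i * b) / f (y i)) k (𝓝 (b ^ ρ)) :=
    fun b hb => (hf b hb).comp hy
  have hstrict : StrictAntiOn (fun x : ℝ => x ^ ρ) (Ioi 0) :=
    fun u hu v _ huv => Real.rpow_lt_rpow_of_neg hu huv hρ
  rw [tendsto_congr' heq]
  refine ⟨fun h => ?_, fun h => ?_⟩
  · refine tendsto_of_tendsto_apply_of_strictAntiOn (Ioi_mem_nhds hc) hmono hlim hstrict ?_ h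
    filter_upwards [hypos, hz] with i hi hzi using div_pos hzi hi
  · exact tendsto_apply_of_antitoneOn (f := fun i x => f (y i * x) / f (y i))
      (g := fun x => x ^ ρ) (Ioi_mem_nhds hc) hmono hlim
      (Real.continuousAt_rpow_const c ρ (Or.inl hc.ne')) h

theorem pos_of_monotoneOn (hf : RegularlyVarying f ρ (𝓝[>] 0)) (hmono : MonotoneOn f (Ioi 0))
    (hnonneg : ∀ u, 0 < u → 0 ≤ f u) {u : ℝ} (hu : 0 < u) : 0 < f u := by
  obtain ⟨t, hft, ht, htu⟩ := (hf.eventually_ne.and (Ioo_mem_nhdsGT hu)).exists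
  exact ((hnonneg t ht).lt_of_ne' hft).trans_le (hmono ht hu htu.le)

theorem const_add (hf : RegularlyVarying f ρ l)
    (hl : ∀ c : ℝ, 0 < c → Tendsto (fun t => t * c) l l) (htop : Tendsto f l atTop) (b : ℝ) :
    RegularlyVarying (fun t => b + f t) ρ l := by
  refine hf.of_tendsto_div (J := 1) hl ?_ one_ne_zero
  have h := (htop.inv_tendsto_atTop.const_mul b).add_const 1
  rw [mul_zero, zero_add] at h
  refine h.congr' ?_
  filter_upwards [hf.eventually_ne] with t ht
  rw [Pi.inv_apply, add_div, div_self ht, div_eq_mul_inv]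

theorem of_comp_antitoneOn {G : ℝ → ℝ} {κ θ : ℝ}
    (hcomp : RegularlyVarying (fun t => G (f t)) (-κ) l)
    (hl : ∀ c : ℝ, 0 < c → Tendsto (fun t => t * c) l l)
    (hG : RegularlyVarying G (-θ) (𝓝[>] 0)) (hθ : 0 < θ) (hanti : AntitoneOn G (Ioi 0))
    (hpos : ∀ᶠ y in 𝓝[>] 0, 0 < G y) (hf : Tendsto f l (𝓝[>] 0)) :
    RegularlyVarying f (κ / θ) l := fun c hc => by
  have hfc : ∀ᶠ t in l, 0 < f (t * c) := (hf.comp (hl c hc)).eventually self_mem_nhdsWithin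
  rw [← hG.tendsto_div_iff_of_antitoneOn (neg_neg_of_pos hθ) hanti hpos hf hfc
    (Real.rpow_pos_of_pos hc _), ← Real.rpow_mul hc.le, mul_neg, div_mul_cancel₀ _ hθ.ne']
  exact hcomp c hc

end RegularlyVarying

theorem exists_eq_rpow_of_map_mul {k : ℝ → ℝ} (hpos : ∀ b, 0 < b → 0 < k b)
    (hcont : ContinuousOn k (Ioi 0)) (hmul : ∀ a b, 0 < a → 0 < b → k (a * b) = k a * k b) :
    ∃ κ : ℝ, ∀ b, 0 < b → k b = b ^ κ := by
  let f : ℝ →+ ℝ := AddMonoidHom.mk' (fun x => Real.log (k (Real.exp x))) fun x y => by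
    rw [Real.exp_add, hmul _ _ (Real.exp_pos _) (Real.exp_pos _),
      Real.log_mul (hpos _ (Real.exp_pos _)).ne' (hpos _ (Real.exp_pos _)).ne']
  have hf : Continuous f :=
    (hcont.comp_continuous Real.continuous_exp Real.exp_pos).log
      fun x => (hpos _ (Real.exp_pos _)).ne'
  have hlin (x : ℝ) : f x = x * f 1 := by
    simpa using (f.toRealLinearMap hf).map_smul x 1
  refine ⟨f 1, fun b hb => ?_⟩
  have hlog : Real.log (k (Real.exp (Real.log b))) = Real.log b * f 1 := hlin (Real.log b)
  rw [Real.exp_log hb] at hlog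
  rw [Real.rpow_def_of_pos hb, ← hlog, Real.exp_log (hpos b hb)]

theorem exists_regularlyVarying_of_tendsto_div {f k : ℝ → ℝ} {l : Filter ℝ} [l.NeBot]
    (hl : ∀ c : ℝ, 0 < c → Tendsto (fun t => t * c) l l)
    (hlim : ∀ c, 0 < c → Tendsto (fun t => f (t * c) / f t) l (𝓝 (k c)))
    (hpos : ∀ c, 0 < c → 0 < k c) (hcont : ContinuousOn k (Ioi 0)) :
    ∃ κ : ℝ, RegularlyVarying f κ l ∧ ∀ c, 0 < c → k c = c ^ κ := by
  have hne : ∀ᶠ t in l, f t ≠ 0 := by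
    filter_upwards [(hlim 1 one_pos).eventually_ne (hpos 1 one_pos).ne'] with t ht h0
    exact ht (by rw [h0, div_zero])
  have hmul (a b : ℝ) (ha : 0 < a) (hb : 0 < b) : k (a * b) = k a * k b := by
    refine tendsto_nhds_unique (hlim _ (mul_pos ha hb))
      ((((hlim b hb).comp (hl a ha)).mul (hlim a ha)).congr' ?_ |>.trans_eq (by rw [mul_comm]))
    filter_upwards [(hl a ha).eventually hne] with t ht
    rw [Function.comp_apply, div_mul_div_cancel₀ ht, mul_assoc]
  obtain ⟨κ, hκ⟩ := exists_eq_rpow_of_map_mul hpos hcont hmul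
  exact ⟨κ, fun c hc => hκ c hc ▸ hlim c hc, hκ⟩

theorem exists_regularlyVarying_of_tendsto_scaled {C g lam : ℝ → ℝ} (hC : AntitoneOn C (Ioi 0))
    (hCtop : Tendsto C (𝓝[>] 0) atTop) (hlam : ∀ t, 0 < t → 0 < lam t)
    (hg : StrictAntiOn g (Ioi 0)) (hgc : ContinuousOn g (Ioi 0)) (hgpos : ∀ q, 0 < q → 0 < g q)
    (hlim : ∀ q, 0 < q → Tendsto (fun t => C (q * lam t) / t) atTop (𝓝 (g q))) :
    ∃ κ : ℝ, 0 < κ ∧ RegularlyVarying C (-κ) (𝓝[>] 0) := by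
  have hg1 := hgpos 1 one_pos
  -- `T` is an asymptotic inverse of `lam`: `r / lam (T r) → 1`.
  let T (r : ℝ) : ℝ := C r / g 1
  have hTtop : Tendsto T (𝓝[>] 0) atTop := hCtop.atTop_div_const hg1
  have hTpos : ∀ᶠ r in 𝓝[>] 0, 0 < T r := hTtop.eventually_gt_atTop 0
  have hscaled : ∀ q ∈ Ioi (0 : ℝ),
      Tendsto (fun r => C (q * lam (T r)) / T r) (𝓝[>] 0) (𝓝 (g q)) :=
    fun q hq => (hlim q hq).comp hTtop
  have hmono : ∀ᶠ r in 𝓝[>] 0, AntitoneOn (fun q => C (q * lam (T r)) / T r) (Ioi 0) := by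
    filter_upwards [hTpos] with r hr u hu v hv huv
    have hlr := hlam _ hr
    exact div_le_div_of_nonneg_right (hC (mul_pos hu hlr) (mul_pos hv hlr) (by gcongr)) hr.le
  have hone : Tendsto (fun r => r / lam (T r)) (𝓝[>] 0) (𝓝 1) := by
    refine tendsto_of_tendsto_apply_of_strictAntiOn (Ioi_mem_nhds one_pos) hmono hscaled hg ?_
      (tendsto_const_nhds.congr' ?_)
    · filter_upwards [hTpos, self_mem_nhdsWithin] with r hr hr0 using div_pos hr0 (hlam _ hr)
    · filter_upwards [hTpos] with r hr
      rw [div_mul_cancel₀ _ (hlam _ hr).ne', eq_div_iff hr.ne', mul_div_cancel₀ _ hg1.ne']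
  have hratio (b : ℝ) (hb : 0 < b) :
      Tendsto (fun r => C (r * b) / C r) (𝓝[>] 0) (𝓝 (g b / g 1)) := by
    have hx : Tendsto (fun r => r / lam (T r) * b) (𝓝[>] 0) (𝓝 b) := by
      simpa using hone.mul_const b
    refine ((tendsto_apply_of_antitoneOn (Ioi_mem_nhds hb) hmono hscaled
      (hgc.continuousAt (Ioi_mem_nhds hb)) hx).div_const (g 1)).congr' ?_
    filter_upwards [hTpos] with r hr
    rw [mul_right_comm, div_mul_cancel₀ _ (hlam _ hr).ne', div_div, div_mul_cancel₀ _ hg1.ne']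
  obtain ⟨κ, hκ, hpow⟩ := exists_regularlyVarying_of_tendsto_div
    (fun c => tendsto_mul_const_nhdsGT_zero) hratio (fun c hc => div_pos (hgpos c hc) hg1)
    (hgc.div_const _)
  refine ⟨-κ, neg_pos.2 ?_, by rwa [neg_neg]⟩
  have h2 : (2 : ℝ) ^ κ < 1 := by
    rw [← hpow 2 two_pos, div_lt_one hg1]
    exact hg (mem_Ioi.2 one_pos) (mem_Ioi.2 two_pos) one_lt_two
  exact lt_of_not_ge fun h => h2.not_ge (Real.one_le_rpow one_le_two h)

end RegularVariation

section LHopital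

variable {f g f' g' : ℝ → ℝ} {a L : ℝ}

theorem isLittleO_of_isLittleO_deriv_nhdsGT (hf : ∀ᶠ x in 𝓝[>] a, HasDerivAt f (f' x) x)
    (hg : ∀ᶠ x in 𝓝[>] a, HasDerivAt g (g' x) x) (hg' : ∀ᶠ x in 𝓝[>] a, g' x ≠ 0)
    (htop : Tendsto g (𝓝[>] a) atTop) (h : f' =o[𝓝[>] a] g') : f =o[𝓝[>] a] g := by
  refine Asymptotics.isLittleO_iff.2 fun ε hε => ?_
  obtain ⟨b, hab, hb⟩ := mem_nhdsGT_iff_exists_Ioc_subset.1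
    (((hf.and hg).and hg').and (Asymptotics.isLittleO_iff.1 h (half_pos hε)))
  have hincr (y : ℝ) (hy : y ∈ Ioo a b) : |f b - f y| ≤ ε / 2 * |g b - g y| := by
    have hsub : Icc y b ⊆ Ioc a b := fun u hu => ⟨hy.1.trans_le hu.1, hu.2⟩
    obtain ⟨u, hu, heq⟩ := exists_ratio_hasDerivAt_eq_ratio_slope f f' hy.2
      (fun u hu => (hb (hsub hu)).1.1.1.continuousAt.continuousWithinAt)
      (fun u hu => (hb (hsub (Ioo_subset_Icc_self hu))).1.1.1) g g'
      (fun u hu => (hb (hsub hu)).1.1.2.continuousAt.continuousWithinAt)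
      (fun u hu => (hb (hsub (Ioo_subset_Icc_self hu))).1.1.2)
    obtain ⟨⟨-, hne⟩, hle⟩ := hb (hsub (Ioo_subset_Icc_self hu))
    have habs : |g b - g y| * |f' u| = |f b - f y| * |g' u| := by
      rw [← abs_mul, heq, abs_mul]
    refine le_of_mul_le_mul_right ?_ (abs_pos.2 hne)
    rw [← habs, mul_right_comm, mul_comm]
    exact mul_le_mul_of_nonneg_right hle (abs_nonneg _)
  filter_upwards [Ioo_mem_nhdsGT hab, htop.eventually_ge_atTop 0,
    htop.eventually_ge_atTop (2 / ε * (|f b| + ε / 2 * |g b|))] with y hy hg0 hgy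
  have hconst : |f b| + ε / 2 * |g b| ≤ ε / 2 * g y := by
    calc |f b| + ε / 2 * |g b| = ε / 2 * (2 / ε * (|f b| + ε / 2 * |g b|)) := by field_simp
      _ ≤ ε / 2 * g y := by gcongr
  have hgsub : |g b - g y| ≤ |g b| + g y := by
    simpa only [abs_of_nonneg hg0] using abs_sub (g b) (g y)
  rw [Real.norm_eq_abs, Real.norm_of_nonneg hg0]
  calc |f y| ≤ |f b| + |f b - f y| := by
        simpa [abs_sub_comm] using abs_sub_abs_le_abs_sub (f y) (f b) |> sub_le_iff_le_add'.1
    _ ≤ |f b| + ε / 2 * (|g b| + g y) := by gcongr; exact (hincr y hy).trans (by gcongr)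
    _ ≤ ε * g y := by linarith

theorem tendsto_div_of_tendsto_deriv_div_nhdsGT (hf : ∀ᶠ x in 𝓝[>] a, HasDerivAt f (f' x) x)
    (hg : ∀ᶠ x in 𝓝[>] a, HasDerivAt g (g' x) x) (hg' : ∀ᶠ x in 𝓝[>] a, g' x ≠ 0)
    (htop : Tendsto g (𝓝[>] a) atTop) (h : Tendsto (fun x => f' x / g' x) (𝓝[>] a) (𝓝 L)) :
    Tendsto (fun x => f x / g x) (𝓝[>] a) (𝓝 L) := by
  have hderiv : (fun x => f' x - L * g' x) =o[𝓝[>] a] g' := by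
    refine (Asymptotics.isLittleO_iff_tendsto' (hg'.mono fun x hx h0 => absurd h0 hx)).2 ?_
    refine (sub_self L ▸ h.sub_const L).congr' ?_
    filter_upwards [hg'] with x hx
    rw [sub_div, mul_div_cancel_right₀ _ hx]
  have hlittle := isLittleO_of_isLittleO_deriv_nhdsGT
    (f := fun x => f x - L * g x) ((hf.and hg).mono fun x hx => hx.1.sub (hx.2.const_mul L))
    hg hg' htop hderiv
  refine (zero_add L ▸ hlittle.tendsto_div_nhds_zero.add_const L).congr' ?_
  filter_upwards [htop.eventually_ne_atTop 0] with x hx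
  rw [sub_div, mul_div_cancel_right₀ _ hx, sub_add_cancel]

end LHopital

/-- The function `G y = ∫ 1 / Ψ` over `[y, 1]`, which linearises the flow `y' = -Ψ y`: along a
positive solution, `G (y t) - t` is constant. For `y > 1` it is minus the integral over
`[1, y]`. -/
def reciprocalPrimitive (Ψ : ℝ → ℝ) (y : ℝ) : ℝ := ∫ u in y..1, 1 / Ψ u

/-- `y` is a solution of `y' = -Ψ y` which exists and stays positive at all positive times. -/
def IsPositiveFlow (Ψ y : ℝ → ℝ) : Prop := ∀ t : ℝ, 0 < t → 0 < y t ∧ HasDerivAt y (-Ψ (y t)) t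

section Flow

variable {Ψ : ℝ → ℝ} (hc : ContinuousOn Ψ (Ioi 0)) (hpos : ∀ u, 0 < u → 0 < Ψ u)
include hc hpos

theorem hasDerivAt_reciprocalPrimitive {y : ℝ} (hy : 0 < y) :
    HasDerivAt (reciprocalPrimitive Ψ) (-(1 / Ψ y)) y := by
  have hcont : ContinuousOn (fun u => 1 / Ψ u) (Ioi 0) :=
    continuousOn_const.div hc fun u hu => (hpos u hu).ne'
  refine intervalIntegral.integral_hasDerivAt_left ((hcont.mono ?_).intervalIntegrable)
    (hcont.stronglyMeasurableAtFilter isOpen_Ioi y hy) (hcont.continuousAt (Ioi_mem_nhds hy))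
  exact fun z hz => (lt_min hy one_pos).trans_le hz.1

theorem strictAntiOn_reciprocalPrimitive : StrictAntiOn (reciprocalPrimitive Ψ) (Ioi 0) := by
  refine strictAntiOn_of_deriv_neg (convex_Ioi 0) (fun y hy =>
    (hasDerivAt_reciprocalPrimitive hc hpos hy).continuousAt.continuousWithinAt) fun y hy => ?_
  rw [interior_Ioi] at hy
  rw [(hasDerivAt_reciprocalPrimitive hc hpos hy).deriv]
  exact neg_neg_of_pos (one_div_pos.2 (hpos y hy))

theorem RegularlyVarying.reciprocalPrimitive {γ : ℝ} (hreg : RegularlyVarying Ψ γ (𝓝[>] 0))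
    (htop : Tendsto (reciprocalPrimitive Ψ) (𝓝[>] 0) atTop) :
    RegularlyVarying (reciprocalPrimitive Ψ) (-(γ - 1)) (𝓝[>] 0) := fun c hc0 => by
  have hderiv {y : ℝ} (hy : 0 < y) := hasDerivAt_reciprocalPrimitive hc hpos hy
  refine tendsto_div_of_tendsto_deriv_div_nhdsGT (f' := fun y => -(1 / Ψ (y * c)) * c)
    (g' := fun y => -(1 / Ψ y)) ?_ ?_ ?_ htop ?_
  · filter_upwards [self_mem_nhdsWithin] with y hy
    simpa [Function.comp_def] using
      (hderiv (mul_pos hy hc0)).comp y ((hasDerivAt_id y).mul_const c)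
  · filter_upwards [self_mem_nhdsWithin] with y hy using hderiv hy
  · filter_upwards [self_mem_nhdsWithin] with y hy
    exact neg_ne_zero.2 (one_div_pos.2 (hpos y hy)).ne'
  · have h := ((hreg c hc0).inv₀ (Real.rpow_pos_of_pos hc0 γ).ne').mul_const c
    rw [← Real.rpow_neg hc0.le, ← Real.rpow_add_one hc0.ne', neg_add_eq_sub, ← neg_sub γ 1] at h
    refine h.congr' ?_
    filter_upwards [self_mem_nhdsWithin] with y hy
    have h1 := hpos y hy
    have h2 := hpos (y * c) (mul_pos hy hc0)
    field_simp

namespace IsPositiveFlow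

variable {y : ℝ → ℝ} (hy : IsPositiveFlow Ψ y)
include hy

theorem reciprocalPrimitive_eq {t : ℝ} (ht : 0 < t) :
    reciprocalPrimitive Ψ (y t) = t + (reciprocalPrimitive Ψ (y 1) - 1) := by
  have hderiv (s : ℝ) (hs : s ∈ Ioi (0 : ℝ)) :
      HasDerivAt (fun s => reciprocalPrimitive Ψ (y s) - s) 0 s := by
    obtain ⟨hys, hys'⟩ := hy s hs
    have h := ((hasDerivAt_reciprocalPrimitive hc hpos hys).comp s hys').sub (hasDerivAt_id s)
    rwa [neg_mul_neg, one_div_mul_cancel (hpos _ hys).ne', sub_self] at h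
  have h := isOpen_Ioi.is_const_of_deriv_eq_zero isPreconnected_Ioi
    (fun s hs => (hderiv s hs).differentiableAt.differentiableWithinAt)
    (fun s hs => (hderiv s hs).deriv) (mem_Ioi.2 ht) (mem_Ioi.2 one_pos)
  linarith

theorem tendsto_reciprocalPrimitive : Tendsto (reciprocalPrimitive Ψ) (𝓝[>] 0) atTop := by
  refine tendsto_atTop.2 fun b => ?_
  let K := reciprocalPrimitive Ψ (y 1) - 1
  have ht : 0 < max 1 (b - K) := one_pos.trans_le (le_max_left _ _)
  have hyt := (hy _ ht).1
  filter_upwards [Ioc_mem_nhdsGT hyt] with x hx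
  calc b ≤ max 1 (b - K) + K := by linarith [le_max_right 1 (b - K)]
    _ = reciprocalPrimitive Ψ (y (max 1 (b - K))) := (hy.reciprocalPrimitive_eq hc hpos ht).symm
    _ ≤ reciprocalPrimitive Ψ x :=
      (strictAntiOn_reciprocalPrimitive hc hpos).antitoneOn hx.1 hyt hx.2

theorem tendsto_zero : Tendsto y atTop (𝓝[>] 0) := by
  refine tendsto_nhdsWithin_iff.2 ⟨tendsto_order.2 ⟨fun b hb => ?_, fun b hb => ?_⟩, ?_⟩
  · filter_upwards [eventually_gt_atTop 0] with t ht using hb.trans (hy t ht).1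
  · filter_upwards [eventually_gt_atTop 0, eventually_gt_atTop (reciprocalPrimitive Ψ b -
      (reciprocalPrimitive Ψ (y 1) - 1))] with t ht hbt
    refine ((strictAntiOn_reciprocalPrimitive hc hpos).lt_iff_gt hb (hy t ht).1).1 ?_
    rw [hy.reciprocalPrimitive_eq hc hpos ht]
    linarith
  · filter_upwards [eventually_gt_atTop 0] with t ht using (hy t ht).1

theorem tendsto_shift_div {γ p : ℝ} {z s : ℝ → ℝ} (hγ : 1 < γ)
    (hreg : RegularlyVarying Ψ γ (𝓝[>] 0)) (hz : ∀ t, 0 < t → 0 < z t)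
    (hzs : ∀ t, 0 < t → reciprocalPrimitive Ψ (z t) = t + s t)
    (hp : 0 < p) (hlim : Tendsto (fun t => z t / y t) atTop (𝓝 p)) :
    Tendsto (fun t => s t / t) atTop (𝓝 (p ^ (-(γ - 1)) - 1)) := by
  have htop := hy.tendsto_reciprocalPrimitive hc hpos
  let K := reciprocalPrimitive Ψ (y 1) - 1
  have hratio := ((hreg.reciprocalPrimitive hc hpos htop).tendsto_div_iff_of_antitoneOn
    (by linarith) (strictAntiOn_reciprocalPrimitive hc hpos).antitoneOn
    (htop.eventually_gt_atTop 0) (hy.tendsto_zero hc hpos)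
    ((eventually_gt_atTop 0).mono hz) hp).2 hlim
  have hK : Tendsto (fun t : ℝ => 1 + K / t) atTop (𝓝 1) := by
    simpa using (tendsto_const_nhds.div_atTop tendsto_id).const_add (1 : ℝ)
  have h := (hratio.mul hK).sub_const 1
  rw [mul_one] at h
  refine h.congr' ?_
  filter_upwards [eventually_gt_atTop 0, eventually_gt_atTop (-K)] with t ht htK
  rw [hy.reciprocalPrimitive_eq hc hpos ht, hzs t ht]
  have hne : t + (reciprocalPrimitive Ψ (y 1) - 1) ≠ 0 := (neg_lt_iff_pos_add.1 htK).ne'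
  field_simp
  ring

end IsPositiveFlow

end Flow

section Supergradient

variable {φ D : ℝ → ℝ} {ρ : ℝ} (hφ : RegularlyVarying φ ρ (𝓝[>] 0))
  (hpos : ∀ᶠ q in 𝓝[>] 0, 0 < φ q) (hD : ∀ p q, 0 < p → 0 < q → φ p - φ q ≤ (p - q) * D q)
include hφ hpos hD

theorem RegularlyVarying.tendsto_mul_supergradient_div :
    Tendsto (fun q => q * D q / φ q) (𝓝[>] 0) (𝓝 ρ) := by
  have hslope : Tendsto (fun c : ℝ => (c ^ ρ - 1) / (c - 1)) (𝓝[≠] 1) (𝓝 ρ) := by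
    have h := (Real.hasDerivAt_rpow_const (x := 1) (p := ρ) (Or.inl one_ne_zero)).tendsto_slope
    simpa [slope_fun_def_field] using h
  have hquot (c : ℝ) (hc : 0 < c) : Tendsto (fun q => (φ (q * c) / φ q - 1) / (c - 1)) (𝓝[>] 0)
      (𝓝 ((c ^ ρ - 1) / (c - 1))) := ((hφ c hc).sub_const 1).div_const _
  have hle {c q : ℝ} (hc : 0 < c) (hq : 0 < q) (hφq : 0 < φ q) :
      φ (q * c) / φ q - 1 ≤ (c - 1) * (q * D q / φ q) := by
    rw [div_sub_one hφq.ne', ← mul_div_assoc, div_le_div_iff_of_pos_right hφq]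
    linarith [hD (q * c) q (mul_pos hq hc) hq]
  refine tendsto_order.2 ⟨fun b hb => ?_, fun b hb => ?_⟩
  · obtain ⟨c, hbc, hc1⟩ := (((hslope.mono_left (nhdsGT_le_nhdsNE 1)).eventually
      (lt_mem_nhds hb)).and self_mem_nhdsWithin).exists
    have hc1 : 1 < c := hc1
    have hc0 : 0 < c := one_pos.trans hc1
    filter_upwards [hpos, self_mem_nhdsWithin, (hquot c hc0).eventually (lt_mem_nhds hbc)]
      with q hφq hq hbq
    exact hbq.trans_le ((div_le_iff₀' (sub_pos.2 hc1)).2 (hle hc0 hq hφq))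
  · obtain ⟨c, ⟨hbc, hc1⟩, hc0⟩ := ((((hslope.mono_left (nhdsLT_le_nhdsNE 1)).eventually
      (gt_mem_nhds hb)).and self_mem_nhdsWithin).and
      (eventually_nhdsWithin_of_eventually_nhds (lt_mem_nhds one_pos))).exists
    filter_upwards [hpos, self_mem_nhdsWithin, (hquot c hc0).eventually (gt_mem_nhds hbc)]
      with q hφq hq hbq
    exact ((le_div_iff_of_neg' (sub_neg.2 hc1)).2 (hle hc0 hq hφq)).trans_lt hbq

theorem RegularlyVarying.supergradient (hρ : ρ ≠ 0) : RegularlyVarying D (ρ - 1) (𝓝[>] 0) := by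
  have hg := hφ.mul (RegularlyVarying.rpow (-1) (self_mem_nhdsWithin (s := Ioi (0 : ℝ))))
  rw [← sub_eq_add_neg] at hg
  refine hg.of_tendsto_div (fun c => tendsto_mul_const_nhdsGT_zero)
    ((hφ.tendsto_mul_supergradient_div hpos hD).congr fun q => ?_) hρ
  rw [Real.rpow_neg_one, ← div_eq_mul_inv, div_div_eq_mul_div, mul_comm]

end Supergradient

theorem setIntegral_lt_setIntegral {α : Type*} [MeasurableSpace α] {μ : Measure α} {s : Set α}
    {f g : α → ℝ} (hs : MeasurableSet s) (hμs : μ s ≠ 0) (hf : IntegrableOn f s μ)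
    (hg : IntegrableOn g s μ) (hfg : ∀ x ∈ s, f x < g x) :
    ∫ x in s, f x ∂μ < ∫ x in s, g x ∂μ := by
  rw [← sub_pos, ← integral_sub hg hf, setIntegral_pos_iff_support_of_nonneg_ae
    ((ae_restrict_mem hs).mono fun x hx => sub_nonneg.2 (hfg x hx).le) (hg.sub hf),
    inter_eq_right.2 fun x hx => Function.mem_support.2 (sub_pos.2 (hfg x hx)).ne']
  exact pos_iff_ne_zero.2 hμs

/-- The function `φ(q) = ∫_{(0,∞)} (1 - e^{-qx}) μ(dx)`, the Laplace exponent of the subordinator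
with Lévy measure `μ`. -/
def laplaceExponent (μ : Measure ℝ) (q : ℝ) : ℝ := ∫ x in Ioi (0 : ℝ), (1 - Real.exp (-(q * x))) ∂μ

section LaplaceExponent

theorem laplaceExponent_zero (μ : Measure ℝ) : laplaceExponent μ 0 = 0 := by
  simp [laplaceExponent]

theorem norm_one_sub_exp_neg_le_one {s : ℝ} (hs : 0 ≤ s) : ‖1 - Real.exp (-s)‖ ≤ 1 := by
  rw [Real.norm_of_nonneg (by simpa using hs)]
  linarith [Real.exp_pos (-s)]

variable {μ : Measure ℝ} [IsFiniteMeasure μ]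

theorem integrableOn_one_sub_exp {q : ℝ} (hq : 0 ≤ q) :
    IntegrableOn (fun x => 1 - Real.exp (-(q * x))) (Ioi 0) μ := by
  refine Integrable.of_bound (by fun_prop) 1 ?_
  filter_upwards [ae_restrict_mem measurableSet_Ioi] with x hx
  exact norm_one_sub_exp_neg_le_one (mul_nonneg hq (le_of_lt hx))

theorem strictMonoOn_laplaceExponent (hμ : μ (Ioi 0) ≠ 0) :
    StrictMonoOn (laplaceExponent μ) (Ici 0) := fun p hp q hq hpq => by
  refine setIntegral_lt_setIntegral measurableSet_Ioi hμ (integrableOn_one_sub_exp hp)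
    (integrableOn_one_sub_exp hq) fun x hx => ?_
  have hlt : p * x < q * x := mul_lt_mul_of_pos_right hpq hx
  gcongr

theorem laplaceExponent_pos (hμ : μ (Ioi 0) ≠ 0) {q : ℝ} (hq : 0 < q) :
    0 < laplaceExponent μ q := by
  simpa only [laplaceExponent_zero] using
    strictMonoOn_laplaceExponent hμ (mem_Ici.2 le_rfl) (mem_Ici.2 hq.le) hq

theorem laplaceExponent_lt_measureReal (hμ : μ (Ioi 0) ≠ 0) {q : ℝ} (hq : 0 ≤ q) :
    laplaceExponent μ q < μ.real (Ioi 0) := by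
  rw [← setIntegral_one_eq_measureReal]
  exact setIntegral_lt_setIntegral measurableSet_Ioi hμ (integrableOn_one_sub_exp hq)
    (integrable_const 1) fun x _ => sub_lt_self 1 (Real.exp_pos _)

theorem continuousOn_laplaceExponent : ContinuousOn (laplaceExponent μ) (Ici 0) := by
  refine continuousOn_of_dominated (bound := fun _ => 1) (fun q _ => by fun_prop)
    (fun q hq => ?_) (integrable_const 1) (ae_of_all _ fun x => by fun_prop)
  filter_upwards [ae_restrict_mem measurableSet_Ioi] with x hx
  exact norm_one_sub_exp_neg_le_one (mul_nonneg hq (le_of_lt hx))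

theorem tendsto_laplaceExponent_zero (hμ : μ (Ioi 0) ≠ 0) :
    Tendsto (laplaceExponent μ) (𝓝[>] 0) (𝓝[>] 0) := by
  refine tendsto_nhdsWithin_iff.2 ⟨?_, ?_⟩
  · simpa only [laplaceExponent_zero] using ((continuousOn_laplaceExponent (μ := μ)) 0
      (mem_Ici.2 le_rfl)).mono_left (nhdsWithin_mono 0 Ioi_subset_Ici_self)
  · filter_upwards [self_mem_nhdsWithin] with q hq using laplaceExponent_pos hμ hq

theorem laplaceExponent_mul_two_le {q : ℝ} (hq : 0 ≤ q) :
    laplaceExponent μ (q * 2) ≤ 2 * laplaceExponent μ q := by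
  rw [laplaceExponent, laplaceExponent, ← integral_const_mul]
  refine setIntegral_mono_on (integrableOn_one_sub_exp (by positivity))
    ((integrableOn_one_sub_exp hq).const_mul 2) measurableSet_Ioi fun x _ => ?_
  have hsq : Real.exp (-(q * 2 * x)) = Real.exp (-(q * x)) ^ 2 := by
    rw [← Real.exp_nat_mul]
    ring_nf
  rw [hsq]
  linarith [sq_nonneg (1 - Real.exp (-(q * x)))]

theorem RegularlyVarying.index_le_one_of_laplaceExponent (hμ : μ (Ioi 0) ≠ 0) {ρ : ℝ}
    (h : RegularlyVarying (laplaceExponent μ) ρ (𝓝[>] 0)) : ρ ≤ 1 := by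
  have h2 : (2 : ℝ) ^ ρ ≤ 2 := by
    refine le_of_tendsto (h 2 two_pos) ?_
    filter_upwards [self_mem_nhdsWithin] with q hq
    rw [div_le_iff₀ (laplaceExponent_pos hμ hq)]
    exact laplaceExponent_mul_two_le (le_of_lt hq)
  rwa [← Real.rpow_le_rpow_left_iff one_lt_two, Real.rpow_one]

end LaplaceExponent

/-- The Laplace transform of `μ`. Where the integral diverges its value is `0`, so a nonzero value
encodes convergence. -/
def laplaceTransform (μ : Measure ℝ) (q : ℝ) : ℝ := ∫ x, Real.exp (-(q * x)) ∂μ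

/-- The measure `y μ(dy)` on `(0, ∞)`. Its Laplace transform is the derivative of
`laplaceExponent μ`, and its mass on `(0, x]` is the mass distribution function of `μ`. -/
def sizeBiased (μ : Measure ℝ) : Measure ℝ :=
  (μ.restrict (Ioi 0)).withDensity fun x => ENNReal.ofReal x

section SizeBiased

variable {μ : Measure ℝ}

theorem sizeBiased_Iic_zero : sizeBiased μ (Iic 0) = 0 := by
  refine withDensity_absolutelyContinuous _ _ ?_
  rw [Measure.restrict_apply measurableSet_Iic, Iic_inter_Ioi, Ioc_self, measure_empty]

theorem integral_sizeBiased (f : ℝ → ℝ) :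
    ∫ x, f x ∂(sizeBiased μ) = ∫ x in Ioi 0, x * f x ∂μ := by
  rw [sizeBiased, integral_withDensity_eq_integral_toReal_smul ENNReal.measurable_ofReal
    (ae_of_all _ fun x => ENNReal.ofReal_lt_top)]
  refine setIntegral_congr_fun measurableSet_Ioi fun x hx => ?_
  simp only [ENNReal.toReal_ofReal (le_of_lt (mem_Ioi.1 hx)), smul_eq_mul]

theorem integrable_sizeBiased_iff (f : ℝ → ℝ) :
    Integrable f (sizeBiased μ) ↔ IntegrableOn (fun x => x * f x) (Ioi 0) μ := by
  rw [sizeBiased, integrable_withDensity_iff_integrable_smul' ENNReal.measurable_ofReal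
    (ae_of_all _ fun x => ENNReal.ofReal_lt_top)]
  refine integrableOn_congr_fun (fun x hx => ?_) measurableSet_Ioi
  simp only [ENNReal.toReal_ofReal (le_of_lt (mem_Ioi.1 hx)), smul_eq_mul]

theorem measureReal_sizeBiased_Iic (x : ℝ) :
    (sizeBiased μ).real (Iic x) = ∫ y in Ioc 0 x, y ∂μ := by
  rw [← integral_indicator_one measurableSet_Iic, integral_sizeBiased, ← Ioi_inter_Iic,
    ← setIntegral_indicator measurableSet_Iic]
  refine integral_congr_ae (ae_of_all _ fun y => ?_)
  by_cases hy : y ∈ Iic x <;> simp [hy]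

variable [IsFiniteMeasure μ]

theorem integrable_exp_sizeBiased {q : ℝ} (hq : 0 < q) :
    Integrable (fun x => Real.exp (-(q * x))) (sizeBiased μ) := by
  refine (integrable_sizeBiased_iff _).2 (Integrable.of_bound (by fun_prop) q⁻¹ ?_)
  filter_upwards [ae_restrict_mem measurableSet_Ioi] with x hx
  have hx : 0 < x := hx
  rw [Real.norm_of_nonneg (by positivity), Real.exp_neg, ← div_eq_mul_inv,
    div_le_iff₀ (Real.exp_pos _), ← div_eq_inv_mul, le_div_iff₀ hq]
  linarith [Real.add_one_le_exp (q * x)]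

theorem laplaceExponent_sub_le {p q : ℝ} (hp : 0 ≤ p) (hq : 0 < q) :
    laplaceExponent μ p - laplaceExponent μ q ≤
      (p - q) * laplaceTransform (sizeBiased μ) q := by
  rw [laplaceExponent, laplaceExponent, laplaceTransform, integral_sizeBiased,
    ← integral_const_mul,
    ← integral_sub (integrableOn_one_sub_exp hp) (integrableOn_one_sub_exp hq.le)]
  refine setIntegral_mono_on
    ((integrableOn_one_sub_exp hp).sub (integrableOn_one_sub_exp hq.le))
    (((integrable_sizeBiased_iff _).1 (integrable_exp_sizeBiased hq)).const_mul _)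
    measurableSet_Ioi fun x _ => ?_
  have hexp : Real.exp (-(p * x)) = Real.exp (-(q * x)) * Real.exp (-((p - q) * x)) := by
    rw [← Real.exp_add]
    ring_nf
  rw [hexp]
  nlinarith [Real.exp_pos (-(q * x)), Real.one_sub_le_exp_neg ((p - q) * x)]

theorem RegularlyVarying.laplaceTransform_sizeBiased (hμ : μ (Ioi 0) ≠ 0) {ρ : ℝ} (hρ : ρ ≠ 0)
    (h : RegularlyVarying (laplaceExponent μ) ρ (𝓝[>] 0)) :
    RegularlyVarying (laplaceTransform (sizeBiased μ)) (ρ - 1) (𝓝[>] 0) :=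
  h.supergradient (eventually_mem_nhdsWithin.mono fun _ hq => laplaceExponent_pos hμ hq)
    (fun _ _ hp hq => laplaceExponent_sub_le hp.le hq) hρ

end SizeBiased

section WeakConvergence

variable {ι : Type*} {l : Filter ι}

theorem integrable_of_continuous_of_ae_mem_Icc {μ : Measure ℝ} [IsFiniteMeasure μ] {a b : ℝ}
    (hμ : ∀ᵐ u ∂μ, u ∈ Icc a b) {f : ℝ → ℝ} (hf : Continuous f) : Integrable f μ := by
  have : IntegrableOn f (Icc a b) μ := hf.continuousOn.integrableOn_compact isCompact_Icc
  rwa [IntegrableOn, Measure.restrict_eq_self_of_ae_mem hμ] at this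

theorem tendsto_integral_polynomial_of_tendsto_moments {Q : ι → Measure ℝ} {P : Measure ℝ}
    [∀ i, IsFiniteMeasure (Q i)] [IsFiniteMeasure P] {a b : ℝ}
    (hQ : ∀ i, ∀ᵐ u ∂(Q i), u ∈ Icc a b) (hP : ∀ᵐ u ∂P, u ∈ Icc a b)
    (hmom : ∀ k : ℕ, Tendsto (fun i => ∫ u, u ^ k ∂(Q i)) l (𝓝 (∫ u, u ^ k ∂P)))
    (p : Polynomial ℝ) :
    Tendsto (fun i => ∫ u, p.eval u ∂(Q i)) l (𝓝 (∫ u, p.eval u ∂P)) := by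
  have hsum {μ : Measure ℝ} [IsFiniteMeasure μ] (hμ : ∀ᵐ u ∂μ, u ∈ Icc a b) :
      ∫ u, p.eval u ∂μ = ∑ k ∈ Finset.range (p.natDegree + 1), p.coeff k * ∫ u, u ^ k ∂μ := by
    simp only [Polynomial.eval_eq_sum_range]
    rw [integral_finsetSum _ fun k _ =>
      integrable_of_continuous_of_ae_mem_Icc hμ (by fun_prop)]
    simp only [integral_const_mul]
  rw [hsum hP]
  simp only [hsum (hQ _)]
  exact tendsto_finsetSum _ fun k _ => (hmom k).const_mul _

theorem tendsto_of_tendsto_moments {Q : ι → ProbabilityMeasure ℝ} {P : ProbabilityMeasure ℝ}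
    {a b : ℝ} (hQ : ∀ i, ∀ᵐ u ∂(Q i : Measure ℝ), u ∈ Icc a b)
    (hP : ∀ᵐ u ∂(P : Measure ℝ), u ∈ Icc a b)
    (hmom : ∀ k : ℕ, Tendsto (fun i => ∫ u, u ^ k ∂(Q i : Measure ℝ)) l
      (𝓝 (∫ u, u ^ k ∂(P : Measure ℝ)))) : Tendsto Q l (𝓝 P) := by
  refine ProbabilityMeasure.tendsto_iff_forall_integral_tendsto.2 fun f =>
    Metric.tendsto_nhds.2 fun ε hε => ?_
  obtain ⟨p, hp⟩ :=
    exists_polynomial_near_of_continuousOn a b f f.continuous.continuousOn (ε / 3) (by positivity)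
  have hnear {R : ProbabilityMeasure ℝ} (hR : ∀ᵐ u ∂(R : Measure ℝ), u ∈ Icc a b) :
      dist (∫ u, p.eval u ∂(R : Measure ℝ)) (∫ u, f u ∂(R : Measure ℝ)) ≤ ε / 3 := by
    rw [dist_eq_norm, ← integral_sub
      (integrable_of_continuous_of_ae_mem_Icc hR p.continuous) (f.integrable _)]
    have hle : ∀ᵐ u ∂(R : Measure ℝ), ‖p.eval u - f u‖ ≤ ε / 3 :=
      hR.mono fun u hu => (hp u hu).le
    simpa using norm_integral_le_of_norm_le_const hle
  have hpoly := tendsto_integral_polynomial_of_tendsto_moments hQ hP hmom p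
  filter_upwards [Metric.tendsto_nhds.1 hpoly (ε / 3) (by positivity)] with i hi
  calc dist (∫ u, f u ∂(Q i : Measure ℝ)) (∫ u, f u ∂(P : Measure ℝ))
      ≤ dist (∫ u, f u ∂(Q i : Measure ℝ)) (∫ u, p.eval u ∂(Q i : Measure ℝ))
        + dist (∫ u, p.eval u ∂(Q i : Measure ℝ)) (∫ u, p.eval u ∂(P : Measure ℝ))
        + dist (∫ u, p.eval u ∂(P : Measure ℝ)) (∫ u, f u ∂(P : Measure ℝ)) :=
        dist_triangle4 _ _ _ _
    _ < ε := by
        rw [dist_comm (∫ u, f u ∂(Q i : Measure ℝ))]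
        linarith [hnear (hQ i), hnear hP]

section Weighted

variable {Ω : Type*} [MeasurableSpace Ω]

theorem setIntegral_eq_integral_mul_tilted_real {w : Ω → ℝ} (hw : ∀ x, 0 < w x) {μ : Measure Ω}
    [NeZero μ] (hwi : Integrable w μ) {E : Set Ω} (hE : MeasurableSet E) :
    ∫ x in E, w x ∂μ = (∫ x, w x ∂μ) * (μ.tilted fun x => Real.log (w x)).real E := by
  have hpos : 0 < ∫ x, Real.exp (Real.log (w x)) ∂μ :=
    integral_exp_pos (by simpa only [Real.exp_log (hw _)] using hwi)
  rw [← integral_indicator_one hE, integral_indicator hE, setIntegral_tilted' _ _ hE,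
    ← integral_const_mul]
  simp only [Real.exp_log (hw _), Pi.one_apply, smul_eq_mul, mul_one] at hpos ⊢
  exact setIntegral_congr_fun hE fun x _ => (mul_div_cancel₀ _ hpos.ne').symm

open scoped BoundedContinuousFunction

variable [TopologicalSpace Ω] [OpensMeasurableSpace Ω] {Q : ι → ProbabilityMeasure Ω}
  {P : ProbabilityMeasure Ω} {w : Ω →ᵇ ℝ}

theorem integrable_exp_log (hw : ∀ x, 0 < w x) (μ : Measure Ω) [IsFiniteMeasure μ] :
    Integrable (fun x => Real.exp (Real.log (w x))) μ := by
  simpa only [Real.exp_log (hw _)] using w.integrable μ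

/-- The probability measure with density proportional to the positive weight `w` with respect
to `R`; used to reduce weak convergence of weighted measures to that of probability measures. -/
def reweighted (w : Ω →ᵇ ℝ) (hw : ∀ x, 0 < w x) (R : ProbabilityMeasure Ω) :
    ProbabilityMeasure Ω :=
  ⟨(R : Measure Ω).tilted fun x => Real.log (w x),
    isProbabilityMeasure_tilted (integrable_exp_log hw _)⟩

theorem tendsto_reweighted (hw : ∀ x, 0 < w x) (hQ : Tendsto Q l (𝓝 P)) :
    Tendsto (fun i => reweighted w hw (Q i)) l (𝓝 (reweighted w hw P)) := by
  have hint := ProbabilityMeasure.tendsto_iff_forall_integral_tendsto.1 hQ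
  refine ProbabilityMeasure.tendsto_iff_forall_integral_tendsto.2 fun f => ?_
  have hquot (R : ProbabilityMeasure Ω) : ∫ x, f x ∂(reweighted w hw R : Measure Ω) =
      (∫ x, w x * f x ∂(R : Measure Ω)) / ∫ x, w x ∂(R : Measure Ω) := by
    simp only [reweighted, ProbabilityMeasure.coe_mk, integral_tilted, Real.exp_log (hw _),
      smul_eq_mul, div_mul_eq_mul_div, integral_div]
  have hpos := integral_exp_pos (integrable_exp_log hw (P : Measure Ω))
  simp only [Real.exp_log (hw _)] at hpos
  simp only [hquot]
  exact (hint (w * f)).div (hint w) hpos.ne'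

theorem tendsto_setIntegral_of_null_frontier [HasOuterApproxClosed Ω] (hw : ∀ x, 0 < w x)
    (hQ : Tendsto Q l (𝓝 P)) {E : Set Ω} (hE : MeasurableSet E)
    (hfr : (P : Measure Ω) (frontier E) = 0) :
    Tendsto (fun i => ∫ x in E, w x ∂(Q i : Measure Ω)) l
      (𝓝 (∫ x in E, w x ∂(P : Measure Ω))) := by
  simp only [setIntegral_eq_integral_mul_tilted_real hw (w.integrable _) hE]
  refine (ProbabilityMeasure.tendsto_iff_forall_integral_tendsto.1 hQ w).mul
    ((ENNReal.tendsto_toReal (measure_ne_top (reweighted w hw P : Measure Ω) E)).comp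
    (ProbabilityMeasure.tendsto_measure_of_null_frontier_of_tendsto'
      (tendsto_reweighted hw hQ) ?_))
  exact tilted_absolutelyContinuous _ _ hfr

end Weighted

end WeakConvergence

section Tauberian

open scoped BoundedContinuousFunction

variable {μ μ₀ : Measure ℝ} {q σ : ℝ}

theorem integrable_exp_of_laplaceTransform_ne_zero (h : laplaceTransform μ q ≠ 0) :
    Integrable (fun x => Real.exp (-(q * x))) μ :=
  not_imp_comm.1 integral_undef h

theorem neZero_of_laplaceTransform_ne_zero (h : laplaceTransform μ q ≠ 0) : NeZero μ :=
  ⟨fun h0 => h (by rw [laplaceTransform, h0, integral_zero_measure])⟩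

theorem laplaceTransform_ne_zero_of_le (hμ : μ (Iio 0) = 0) {p : ℝ}
    (h : laplaceTransform μ p ≠ 0) (hpq : p ≤ q) : laplaceTransform μ q ≠ 0 := by
  have := neZero_of_laplaceTransform_ne_zero h
  refine (integral_exp_pos <|
    (integrable_exp_of_laplaceTransform_ne_zero h).mono' (by fun_prop) ?_).ne'
  filter_upwards [measure_eq_zero_iff_ae_notMem.1 hμ] with x hx
  rw [Real.norm_of_nonneg (Real.exp_pos _).le]
  gcongr
  exact not_lt.1 hx

theorem measure_Iic_lt_top_of_laplaceTransform_ne_zero (hq : 0 < q)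
    (h : laplaceTransform μ q ≠ 0) (x : ℝ) : μ (Iic x) < ⊤ := by
  refine (measure_mono fun y hy => ?_).trans_lt
    ((integrable_exp_of_laplaceTransform_ne_zero h).measure_ge_lt_top (Real.exp_pos (-(q * x))))
  have hy : y ≤ x := hy
  simpa using mul_le_mul_of_nonneg_left hy hq.le

/-- The law of `exp (-(q * X))`, where `X` has density proportional to `exp (-(q * x))` with
respect to `μ`. It lives on `[0, 1]` and its moments are ratios of values of the Laplace
transform, which turns convergence of those ratios into weak convergence. -/
def expTilt (μ : Measure ℝ) (q : ℝ) : Measure ℝ :=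
  (μ.tilted fun x => -(q * x)).map fun x => Real.exp (-(q * x))

theorem isProbabilityMeasure_expTilt (h : laplaceTransform μ q ≠ 0) :
    IsProbabilityMeasure (expTilt μ q) := by
  have := neZero_of_laplaceTransform_ne_zero h
  have := isProbabilityMeasure_tilted (integrable_exp_of_laplaceTransform_ne_zero h)
  exact Measure.isProbabilityMeasure_map (by fun_prop)

theorem ae_expTilt_mem_Icc (hμ : μ (Iio 0) = 0) (hq : 0 ≤ q) :
    ∀ᵐ u ∂(expTilt μ q), u ∈ Icc 0 1 := by
  refine (ae_map_iff (by fun_prop) measurableSet_Icc).2 ?_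
  filter_upwards [tilted_absolutelyContinuous μ _ (measure_eq_zero_iff_ae_notMem.1 hμ)] with x hx
  have hx : 0 ≤ x := not_lt.1 hx
  exact ⟨(Real.exp_pos _).le, Real.exp_le_one_iff.2 (neg_nonpos.2 (by positivity))⟩

theorem integral_pow_expTilt (k : ℕ) :
    ∫ u, u ^ k ∂(expTilt μ q) = laplaceTransform μ (q * (k + 1)) / laplaceTransform μ q := by
  rw [expTilt, integral_map (by fun_prop) (by fun_prop)]
  simp only [← Real.exp_nat_mul]
  rw [integral_exp_tilted, laplaceTransform, laplaceTransform]
  congr 2 with x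
  simp only [Pi.add_apply]
  ring_nf

/-- The weight `u ↦ 1 / u` on `[e⁻¹, ∞)`, extended continuously by a constant. Integrating it
over `[e⁻¹, ∞)` against `expTilt μ q` undoes the tilting on `x ≤ q⁻¹`. -/
def truncatedInv : ℝ →ᵇ ℝ :=
  BoundedContinuousFunction.ofNormedAddCommGroup (fun u => (max u (Real.exp (-1)))⁻¹)
    ((continuous_id.max continuous_const).inv₀ fun u =>
      ((Real.exp_pos (-1)).trans_le (le_max_right u _)).ne')
    (Real.exp (-1))⁻¹ fun u => by
      have h := (Real.exp_pos (-1)).trans_le (le_max_right u _)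
      rw [Real.norm_of_nonneg (inv_nonneg.2 h.le)]
      exact inv_anti₀ (Real.exp_pos _) (le_max_right _ _)

theorem truncatedInv_pos (u : ℝ) : 0 < truncatedInv u :=
  inv_pos.2 ((Real.exp_pos (-1)).trans_le (le_max_right u _))

theorem truncatedInv_of_le {u : ℝ} (hu : Real.exp (-1) ≤ u) : truncatedInv u = u⁻¹ :=
  congrArg _ (max_eq_left hu)

theorem preimage_exp_neg_mul_Ici (hq : 0 < q) :
    (fun x => Real.exp (-(q * x))) ⁻¹' Ici (Real.exp (-1)) = Iic q⁻¹ := by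
  ext x
  rw [mem_preimage, mem_Ici, Real.exp_le_exp, neg_le_neg_iff, mem_Iic, ← le_div_iff₀' hq, one_div]

theorem setIntegral_truncatedInv_expTilt (hq : 0 < q) :
    ∫ u in Ici (Real.exp (-1)), truncatedInv u ∂(expTilt μ q) =
      μ.real (Iic q⁻¹) / laplaceTransform μ q := by
  rw [expTilt, setIntegral_map measurableSet_Ici (by fun_prop) (by fun_prop),
    preimage_exp_neg_mul_Ici hq, setIntegral_tilted' _ _ measurableSet_Iic]
  calc ∫ x in Iic q⁻¹, (Real.exp (-(q * x)) / ∫ x, Real.exp (-(q * x)) ∂μ) •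
        truncatedInv (Real.exp (-(q * x))) ∂μ
      = ∫ _ in Iic q⁻¹, (laplaceTransform μ q)⁻¹ ∂μ := by
        refine setIntegral_congr_fun measurableSet_Iic fun x hx => ?_
        rw [← preimage_exp_neg_mul_Ici hq] at hx
        simp only [truncatedInv_of_le hx, smul_eq_mul, laplaceTransform]
        field_simp
    _ = μ.real (Iic q⁻¹) / laplaceTransform μ q := by
        rw [setIntegral_const, smul_eq_mul, div_eq_mul_inv]

theorem expTilt_frontier_Ici (h : μ {q⁻¹} = 0) :
    expTilt μ q (frontier (Ici (Real.exp (-1)))) = 0 := by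
  rw [frontier_Ici, expTilt, Measure.map_apply (by fun_prop) (measurableSet_singleton _)]
  refine tilted_absolutelyContinuous _ _ (measure_mono_null (fun x hx => ?_) h)
  have hx : q * x = 1 := by simpa using hx
  exact eq_inv_of_mul_eq_one_right hx

theorem tendsto_measureReal_Iic_div_laplaceTransform (hμ : μ (Iio 0) = 0) (hμ₀ : μ₀ (Iio 0) = 0)
    (hω : ∀ q, 0 < q → laplaceTransform μ q ≠ 0) (hω₀ : laplaceTransform μ₀ 1 ≠ 0)
    (hatom : μ₀ {1} = 0)
    (hratio : ∀ c, 0 < c → Tendsto (fun q => laplaceTransform μ (q * c) / laplaceTransform μ q)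
      (𝓝[>] 0) (𝓝 (laplaceTransform μ₀ c / laplaceTransform μ₀ 1))) :
    Tendsto (fun q => μ.real (Iic q⁻¹) / laplaceTransform μ q) (𝓝[>] 0)
      (𝓝 (μ₀.real (Iic 1) / laplaceTransform μ₀ 1)) := by
  let P : ProbabilityMeasure ℝ := ⟨expTilt μ₀ 1, isProbabilityMeasure_expTilt hω₀⟩
  let Q (q : Ioi (0 : ℝ)) : ProbabilityMeasure ℝ :=
    ⟨expTilt μ q, isProbabilityMeasure_expTilt (hω q q.2)⟩
  have hQ : Tendsto Q atBot (𝓝 P) := by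
    refine tendsto_of_tendsto_moments (a := 0) (b := 1)
      (fun q => ae_expTilt_mem_Icc hμ (le_of_lt q.2)) (ae_expTilt_mem_Icc hμ₀ zero_le_one)
      fun k => ?_
    simp only [Q, P, ProbabilityMeasure.coe_mk, integral_pow_expTilt, one_mul]
    exact (tendsto_comp_coe_Ioi_atBot (.of_dense _)).2 (hratio _ (by positivity))
  have hint := tendsto_setIntegral_of_null_frontier truncatedInv_pos hQ measurableSet_Ici
    (expTilt_frontier_Ici (by rwa [inv_one]))
  rw [ProbabilityMeasure.coe_mk, setIntegral_truncatedInv_expTilt one_pos, inv_one] at hint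
  exact (tendsto_comp_coe_Ioi_atBot (.of_dense _)).1
    (hint.congr fun q => setIntegral_truncatedInv_expTilt q.2)

/-- The measure `x ^ (σ - 1) dx` on `(0, ∞)`, whose Laplace transform is a multiple of
`q ^ (-σ)` for `0 < σ`. -/
def rpowMeasure (σ : ℝ) : Measure ℝ :=
  (volume.restrict (Ioi 0)).withDensity fun x => ENNReal.ofReal (x ^ (σ - 1))

theorem laplaceTransform_rpowMeasure (hσ : 0 < σ) (hq : 0 < q) :
    laplaceTransform (rpowMeasure σ) q = q ^ (-σ) * Real.Gamma σ := by
  rw [laplaceTransform, rpowMeasure,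
    integral_withDensity_eq_integral_toReal_smul (by fun_prop)
      (ae_of_all _ fun x => ENNReal.ofReal_lt_top),
    Real.rpow_neg hq.le, ← Real.inv_rpow hq.le, ← one_div,
    ← Real.integral_rpow_mul_exp_neg_mul_Ioi hσ hq]
  refine setIntegral_congr_fun measurableSet_Ioi fun x hx => ?_
  have hx : 0 < x := hx
  simp only [smul_eq_mul, ENNReal.toReal_ofReal (Real.rpow_nonneg hx.le _)]

theorem rpowMeasure_Iic_ne_zero {x : ℝ} (hx : 0 < x) : rpowMeasure σ (Iic x) ≠ 0 := by
  rw [rpowMeasure, Ne, withDensity_apply_eq_zero (by fun_prop)]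
  have hsub : Ioc 0 x ⊆ {y | ENNReal.ofReal (y ^ (σ - 1)) ≠ 0} ∩ Iic x := fun y hy =>
    ⟨(ENNReal.ofReal_pos.2 (Real.rpow_pos_of_pos hy.1 _)).ne', hy.2⟩
  refine fun h => (measure_mono_null hsub h).not_gt ?_
  rw [Measure.restrict_apply measurableSet_Ioc, inter_eq_left.2 Ioc_subset_Ioi_self,
    Real.volume_Ioc]
  simpa using hx

theorem exists_measure_laplaceTransform_div_eq_rpow (hσ : 0 ≤ σ) :
    ∃ μ : Measure ℝ, μ (Iio 0) = 0 ∧ μ {1} = 0 ∧ μ (Iic 1) ≠ 0 ∧ laplaceTransform μ 1 ≠ 0 ∧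
      ∀ c, 0 < c → laplaceTransform μ c / laplaceTransform μ 1 = c ^ (-σ) := by
  obtain rfl | hσ := hσ.eq_or_lt
  · exact ⟨Measure.dirac 0, by simp, by simp, by simp, by simp [laplaceTransform],
      by simp [laplaceTransform]⟩
  have hnull {s : Set ℝ} (hs : volume.restrict (Ioi 0) s = 0) : rpowMeasure σ s = 0 :=
    withDensity_absolutelyContinuous _ _ hs
  refine ⟨rpowMeasure σ, hnull ?_, hnull ?_, rpowMeasure_Iic_ne_zero one_pos, ?_, fun c hc => ?_⟩
  · rw [Measure.restrict_apply measurableSet_Iio, Iio_inter_Ioi, Ioo_self, measure_empty]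
  · exact Measure.restrict_le_self.absolutelyContinuous Real.volume_singleton
  · rw [laplaceTransform_rpowMeasure hσ one_pos]
    have := Real.Gamma_pos_of_pos hσ
    positivity
  · rw [laplaceTransform_rpowMeasure hσ hc, laplaceTransform_rpowMeasure hσ one_pos,
      Real.one_rpow, one_mul, mul_div_cancel_right₀ _ (Real.Gamma_pos_of_pos hσ).ne']

theorem RegularlyVarying.laplaceTransform_ne_zero (hμ : μ (Iio 0) = 0)
    (h : RegularlyVarying (laplaceTransform μ) σ (𝓝[>] 0)) (hq : 0 < q) :
    laplaceTransform μ q ≠ 0 := by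
  obtain ⟨p, hp, hpq⟩ := (h.eventually_ne.and (Ioo_mem_nhdsGT hq)).exists
  exact laplaceTransform_ne_zero_of_le hμ hp hpq.2.le

theorem RegularlyVarying.exists_tendsto_measureReal_Iic_div (hμ : μ (Iio 0) = 0) (hσ : 0 ≤ σ)
    (h : RegularlyVarying (laplaceTransform μ) (-σ) (𝓝[>] 0)) :
    ∃ J : ℝ, 0 < J ∧
      Tendsto (fun x => μ.real (Iic x) / laplaceTransform μ x⁻¹) atTop (𝓝 J) := by
  obtain ⟨μ₀, hμ₀, hatom, hIic, hne, hpow⟩ := exists_measure_laplaceTransform_div_eq_rpow hσ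
  refine ⟨μ₀.real (Iic 1) / laplaceTransform μ₀ 1, div_pos ?_ ?_, ?_⟩
  · exact ENNReal.toReal_pos hIic
      (measure_Iic_lt_top_of_laplaceTransform_ne_zero one_pos hne 1).ne
  · exact (integral_nonneg fun _ => (Real.exp_pos _).le).lt_of_ne' hne
  · have hlim := (tendsto_measureReal_Iic_div_laplaceTransform hμ hμ₀
      (fun q => h.laplaceTransform_ne_zero hμ) hne hatom fun c hc => hpow c hc ▸ h c hc).comp
      tendsto_inv_atTop_nhdsGT_zero
    simpa only [Function.comp_def, inv_inv] using hlim

theorem RegularlyVarying.measureReal_Iic (hμ : μ (Iio 0) = 0) (hσ : 0 ≤ σ)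
    (h : RegularlyVarying (laplaceTransform μ) (-σ) (𝓝[>] 0)) :
    RegularlyVarying (fun x => μ.real (Iic x)) σ atTop := by
  obtain ⟨J, hJ, hlim⟩ := h.exists_tendsto_measureReal_Iic_div hμ hσ
  rw [← neg_neg σ]
  exact h.comp_inv.of_tendsto_div (fun c hc => tendsto_id.atTop_mul_const hc) hlim hJ.ne'

end Tauberian

section BranchingMechanism

/-- The critical branching mechanism with diffusion coefficient `β` and Lévy measure `π`
restricted to `(0, ∞)`. -/
def branchingMechanism (β : ℝ) (π : Measure ℝ) (u : ℝ) : ℝ :=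
  β * u ^ 2 + ∫ x in Ioi (0 : ℝ), (Real.exp (-(u * x)) - 1 + u * x) ∂π

theorem exp_neg_sub_one_add_nonneg (s : ℝ) : 0 ≤ Real.exp (-s) - 1 + s := by
  linarith [Real.add_one_le_exp (-s)]

theorem exp_neg_sub_one_add_le_self {s : ℝ} (hs : 0 ≤ s) : Real.exp (-s) - 1 + s ≤ s := by
  linarith [Real.exp_le_one_iff.2 (neg_nonpos.2 hs)]

theorem exp_neg_sub_one_add_le_sq {s : ℝ} (hs : 0 ≤ s) : Real.exp (-s) - 1 + s ≤ s ^ 2 := by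
  obtain h | h := le_total s 1
  · have := Real.abs_exp_sub_one_sub_id_le (x := -s) (by rwa [abs_neg, abs_of_nonneg hs])
    linarith [le_abs_self (Real.exp (-s) - 1 - -s), neg_sq s]
  · nlinarith [exp_neg_sub_one_add_le_self hs]

theorem monotoneOn_exp_neg_sub_one_add :
    MonotoneOn (fun s => Real.exp (-s) - 1 + s) (Ici 0) := fun s hs t _ hst => by
  have hexp : Real.exp (-t) = Real.exp (-s) * Real.exp (-(t - s)) := by
    rw [← Real.exp_add]
    ring_nf
  have hs1 : Real.exp (-s) ≤ 1 := Real.exp_le_one_iff.2 (neg_nonpos.2 hs)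
  simp only [hexp]
  nlinarith [Real.exp_pos (-s), Real.one_sub_le_exp_neg (t - s)]

theorem norm_exp_neg_mul_sub_one_add_le {u x : ℝ} (hu : 0 ≤ u) (hx : 0 ≤ x) :
    ‖Real.exp (-(u * x)) - 1 + u * x‖ ≤ max u (u ^ 2) * min x (x ^ 2) := by
  rw [Real.norm_of_nonneg (exp_neg_sub_one_add_nonneg _)]
  have hux := mul_nonneg hu hx
  obtain h | h := le_total x (x ^ 2)
  · rw [min_eq_left h]
    exact (exp_neg_sub_one_add_le_self hux).trans (by gcongr; exact le_max_left _ _)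
  · rw [min_eq_right h]
    refine (exp_neg_sub_one_add_le_sq hux).trans ?_
    rw [mul_pow]
    gcongr
    exact le_max_right _ _

variable {β : ℝ} {π : Measure ℝ}

theorem branchingMechanism_nonneg (hβ : 0 ≤ β) (u : ℝ) : 0 ≤ branchingMechanism β π u :=
  add_nonneg (by positivity) (integral_nonneg fun _ => exp_neg_sub_one_add_nonneg _)

theorem integrableOn_min_sq (hπ : ∫⁻ x in Ioi (0 : ℝ), ENNReal.ofReal (min x (x ^ 2)) ∂π < ⊤) :
    IntegrableOn (fun x : ℝ => min x (x ^ 2)) (Ioi 0) π := by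
  refine ⟨by fun_prop, (hasFiniteIntegral_iff_ofReal ?_).2 hπ⟩
  filter_upwards [ae_restrict_mem measurableSet_Ioi] with x hx
  exact le_min (le_of_lt hx) (sq_nonneg x)

variable (hπ : IntegrableOn (fun x : ℝ => min x (x ^ 2)) (Ioi 0) π)
include hπ

theorem monotoneOn_branchingMechanism (hβ : 0 ≤ β) :
    MonotoneOn (branchingMechanism β π) (Ici 0) := fun u hu v hv huv => by
  have hint {w : ℝ} (hw : 0 ≤ w) :
      IntegrableOn (fun x => Real.exp (-(w * x)) - 1 + w * x) (Ioi 0) π := by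
    refine (hπ.const_mul (max w (w ^ 2))).mono' (by fun_prop) ?_
    filter_upwards [ae_restrict_mem measurableSet_Ioi] with x hx
    exact norm_exp_neg_mul_sub_one_add_le hw (le_of_lt hx)
  have hu : 0 ≤ u := hu
  refine add_le_add (by gcongr) (setIntegral_mono_on (hint hu) (hint hv) measurableSet_Ioi
    fun x hx => ?_)
  have hx : 0 ≤ x := le_of_lt hx
  exact monotoneOn_exp_neg_sub_one_add (mul_nonneg hu hx) (mul_nonneg hv hx) (by gcongr)

theorem continuousOn_branchingMechanism : ContinuousOn (branchingMechanism β π) (Ioi 0) := by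
  refine ContinuousOn.add (by fun_prop) fun u hu => ContinuousAt.continuousWithinAt ?_
  refine continuousAt_of_dominated (bound := fun x => max (u + 1) ((u + 1) ^ 2) * min x (x ^ 2))
    (Eventually.of_forall fun v => by fun_prop) ?_ (hπ.const_mul _)
    (ae_of_all _ fun x => by fun_prop)
  filter_upwards [Ioo_mem_nhds hu (lt_add_one u)] with v hv
  filter_upwards [ae_restrict_mem measurableSet_Ioi] with x hx
  have hx : 0 < x := hx
  have hv0 := hv.1.le
  refine (norm_exp_neg_mul_sub_one_add_le hv0 hx.le).trans ?_
  have hvu := hv.2.le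
  gcongr

end BranchingMechanism

section MassDistribution

variable {μ : Measure ℝ} [IsFiniteMeasure μ]

theorem RegularlyVarying.massDistribution (hμ : μ (Ioi 0) ≠ 0) {ρ : ℝ} (hρ : 0 < ρ)
    (h : RegularlyVarying (laplaceExponent μ) ρ (𝓝[>] 0)) :
    RegularlyVarying (fun x => ∫ y in Ioc 0 x, y ∂μ) (1 - ρ) atTop := by
  have hLT := h.laplaceTransform_sizeBiased hμ hρ.ne'
  rw [← neg_sub] at hLT
  simpa only [measureReal_sizeBiased_Iic] using
    hLT.measureReal_Iic (measure_mono_null Iio_subset_Iic_self sizeBiased_Iic_zero)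
      (sub_nonneg.2 (h.index_le_one_of_laplaceExponent hμ))

theorem exists_slowlyVarying_massDistribution (hμ : μ (Ioi 0) ≠ 0) {ρ : ℝ} (hρ : 0 < ρ)
    (h : RegularlyVarying (laplaceExponent μ) ρ (𝓝[>] 0)) :
    ∃ L : ℝ → ℝ, (∀ᶠ x in atTop, 0 < L x) ∧
      (∀ c : ℝ, 0 < c → Tendsto (fun x => L (c * x) / L x) atTop (𝓝 1)) ∧
      ∀ x : ℝ, 0 < x → ∫ y in Ioc 0 x, y ∂μ = x ^ (1 - ρ) * L x := by
  have hRV := h.massDistribution hμ hρ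
  refine hRV.exists_slowlyVarying (hRV.eventually_ne.mono fun x hx => ?_)
  exact (setIntegral_nonneg measurableSet_Ioc fun y hy => hy.1.le).lt_of_ne' hx

end MassDistribution

section ScalingLimit

variable {ν : ℝ → Measure ℝ} {νhat : Measure ℝ} [IsFiniteMeasure νhat] {a lam : ℝ → ℝ}

theorem tendsto_laplaceExponent_div_measureReal (hνhat : νhat (Ioi 0) ≠ 0)
    (hlim : ∀ f : ℝ → ℝ, ContinuousOn f (Ioi 0) → (∃ M : ℝ, ∀ x ∈ Ioi (0 : ℝ), |f x| ≤ M) →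
      Tendsto (fun t => a t * ∫ x in Ioi (0 : ℝ), f (lam t * x) ∂(ν t)) atTop
        (𝓝 (∫ x in Ioi (0 : ℝ), f x ∂νhat))) {q : ℝ} (hq : 0 ≤ q) :
    Tendsto (fun t => laplaceExponent (ν t) (q * lam t) / (ν t).real (Ioi 0)) atTop
      (𝓝 (laplaceExponent νhat q / νhat.real (Ioi 0))) := by
  have hM : νhat.real (Ioi 0) ≠ 0 := (measureReal_ne_zero_iff (measure_ne_top _ _)).2 hνhat
  have hmass := hlim (fun _ => 1) continuousOn_const ⟨1, fun x _ => abs_one.le⟩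
  simp only [setIntegral_one_eq_measureReal] at hmass
  have hexp := hlim (fun x => 1 - Real.exp (-(q * x))) (by fun_prop)
    ⟨1, fun x hx => norm_one_sub_exp_neg_le_one (mul_nonneg hq (le_of_lt hx))⟩
  simp only [← mul_assoc] at hexp
  refine (hexp.div hmass hM).congr' ?_
  filter_upwards [hmass.eventually_ne hM] with t ht
  exact mul_div_mul_left _ _ (left_ne_zero_of_mul ht)

theorem laplaceExponent_div_measureReal_mem_Ioo {μ : Measure ℝ} [IsFiniteMeasure μ]
    (hμ : μ (Ioi 0) ≠ 0) {q : ℝ} (hq : 0 < q) :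
    laplaceExponent μ q / μ.real (Ioi 0) ∈ Ioo 0 1 := by
  have hM : 0 < μ.real (Ioi 0) := ENNReal.toReal_pos hμ (measure_ne_top _ _)
  exact ⟨div_pos (laplaceExponent_pos hμ hq) hM,
    (div_lt_one hM).2 (laplaceExponent_lt_measureReal hμ hq.le)⟩

theorem strictAntiOn_rpow_laplaceExponent_div {μ : Measure ℝ} [IsFiniteMeasure μ]
    (hμ : μ (Ioi 0) ≠ 0) {θ : ℝ} (hθ : θ < 0) :
    StrictAntiOn (fun q => (laplaceExponent μ q / μ.real (Ioi 0)) ^ θ) (Ioi 0) :=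
  fun _ hq _ hr hqr => Real.rpow_lt_rpow_of_neg
    (laplaceExponent_div_measureReal_mem_Ioo hμ hq).1
    (div_lt_div_of_pos_right (strictMonoOn_laplaceExponent hμ
      (Ioi_subset_Ici_self hq) (Ioi_subset_Ici_self hr) hqr)
      (ENNReal.toReal_pos hμ (measure_ne_top _ _))) hθ

variable {Ψ : ℝ → ℝ} (hc : ContinuousOn Ψ (Ioi 0)) (hpos : ∀ u, 0 < u → 0 < Ψ u)
include hc hpos

theorem antitoneOn_reciprocalPrimitive_laplaceExponent {μ : Measure ℝ} [IsFiniteMeasure μ]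
    (hμ : μ (Ioi 0) ≠ 0) :
    AntitoneOn (fun q => reciprocalPrimitive Ψ (laplaceExponent μ q)) (Ioi 0) :=
  fun _ hq _ hr hqr => (strictAntiOn_reciprocalPrimitive hc hpos).antitoneOn
    (laplaceExponent_pos hμ hq) (laplaceExponent_pos hμ hr)
    ((strictMonoOn_laplaceExponent hμ).monotoneOn (Ioi_subset_Ici_self hq)
      (Ioi_subset_Ici_self hr) hqr)

variable {γ : ℝ} (hγ : 1 < γ) (hreg : RegularlyVarying Ψ γ (𝓝[>] 0))
  (hfin : ∀ t, 0 < t → IsFiniteMeasure (ν t)) (hnz : ∀ t, 0 < t → ν t (Ioi 0) ≠ 0)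
  (hmass : IsPositiveFlow Ψ fun t => (ν t).real (Ioi 0))
  (hflow : ∀ q, 0 < q → IsPositiveFlow Ψ fun t => laplaceExponent (ν t) q)
include hγ hreg hfin hnz hmass hflow

theorem exists_regularlyVarying_reciprocalPrimitive_laplaceExponent
    (hνhat : νhat (Ioi 0) ≠ 0) (hlam : ∀ t, 0 < t → 0 < lam t)
    (hlim : ∀ q, 0 < q →
      Tendsto (fun t => laplaceExponent (ν t) (q * lam t) / (ν t).real (Ioi 0)) atTop
        (𝓝 (laplaceExponent νhat q / νhat.real (Ioi 0)))) :
    ∃ κ : ℝ, 0 < κ ∧ ∀ t, 0 < t → RegularlyVarying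
      (fun q => reciprocalPrimitive Ψ (laplaceExponent (ν t) q)) (-κ) (𝓝[>] 0) := by
  have := hfin 1 one_pos
  let C (q : ℝ) : ℝ := reciprocalPrimitive Ψ (laplaceExponent (ν 1) q) - 1
  have hGC (q : ℝ) (hq : 0 < q) (t : ℝ) (ht : 0 < t) :
      reciprocalPrimitive Ψ (laplaceExponent (ν t) q) = t + C q :=
    (hflow q hq).reciprocalPrimitive_eq hc hpos ht
  have hCtop : Tendsto C (𝓝[>] 0) atTop := tendsto_atTop_add_const_right _ (-1) <|
    (hmass.tendsto_reciprocalPrimitive hc hpos).comp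
      (tendsto_laplaceExponent_zero (hnz 1 one_pos))
  have hθ : -(γ - 1) < 0 := neg_neg_of_pos (sub_pos.2 hγ)
  have hp {q : ℝ} (hq : 0 < q) := laplaceExponent_div_measureReal_mem_Ioo hνhat hq
  have hCscaled (q : ℝ) (hq : 0 < q) : Tendsto (fun t => C (q * lam t) / t) atTop
      (𝓝 ((laplaceExponent νhat q / νhat.real (Ioi 0)) ^ (-(γ - 1)) - 1)) := by
    have hq' (t : ℝ) (ht : 0 < t) : 0 < q * lam t := mul_pos hq (hlam t ht)
    exact hmass.tendsto_shift_div hc hpos hγ hreg (fun t ht => (hflow _ (hq' t ht) t ht).1)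
      (fun t ht => hGC _ (hq' t ht) t ht) (hp hq).1 (hlim q hq)
  obtain ⟨κ, hκ, hC⟩ := exists_regularlyVarying_of_tendsto_scaled (C := C)
    ((antitoneOn_reciprocalPrimitive_laplaceExponent hc hpos (hnz 1 one_pos)).add_const (-1))
    hCtop hlam ((strictAntiOn_rpow_laplaceExponent_div hνhat hθ).add_const (-1))
    ((((continuousOn_laplaceExponent.mono Ioi_subset_Ici_self).div_const _).rpow_const
      fun q hq => Or.inl (hp hq).1.ne').sub continuousOn_const)
    (fun q hq => sub_pos.2 (Real.one_lt_rpow_of_pos_of_lt_one_of_neg (hp hq).1 (hp hq).2 hθ))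
    hCscaled
  refine ⟨κ, hκ, fun t ht c hc0 => ?_⟩
  refine (hC.const_add (fun c => tendsto_mul_const_nhdsGT_zero) hCtop t c hc0).congr' ?_
  filter_upwards [self_mem_nhdsWithin] with q hq
  rw [hGC q hq t ht, hGC _ (mul_pos hq hc0) t ht]

theorem exists_regularlyVarying_laplaceExponent
    (hνhat : νhat (Ioi 0) ≠ 0) (hlam : ∀ t, 0 < t → 0 < lam t)
    (hlim : ∀ q, 0 < q →
      Tendsto (fun t => laplaceExponent (ν t) (q * lam t) / (ν t).real (Ioi 0)) atTop
        (𝓝 (laplaceExponent νhat q / νhat.real (Ioi 0)))) :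
    ∃ ρ : ℝ, 0 < ρ ∧ ∀ t, 0 < t → RegularlyVarying (laplaceExponent (ν t)) ρ (𝓝[>] 0) := by
  obtain ⟨κ, hκ, hG⟩ := exists_regularlyVarying_reciprocalPrimitive_laplaceExponent
    hc hpos hγ hreg hfin hnz hmass hflow hνhat hlam hlim
  have htop := hmass.tendsto_reciprocalPrimitive hc hpos
  refine ⟨κ / (γ - 1), div_pos hκ (sub_pos.2 hγ), fun t ht => ?_⟩
  have := hfin t ht
  exact (hG t ht).of_comp_antitoneOn (fun c => tendsto_mul_const_nhdsGT_zero)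
    (hreg.reciprocalPrimitive hc hpos htop) (sub_pos.2 hγ)
    (strictAntiOn_reciprocalPrimitive hc hpos).antitoneOn (htop.eventually_gt_atTop 0)
    (tendsto_laplaceExponent_zero (hnz t ht))

end ScalingLimit

theorem mass_distribution_regularly_varying_general
    {Ψ : ℝ → ℝ} (hc : ContinuousOn Ψ (Ioi 0)) (hpos : ∀ u, 0 < u → 0 < Ψ u)
    {γ : ℝ} (hγ : 1 < γ) (hreg : RegularlyVarying Ψ γ (𝓝[>] 0))
    {ν : ℝ → Measure ℝ} (hfin : ∀ t, 0 < t → IsFiniteMeasure (ν t))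
    (hnz : ∀ t, 0 < t → ν t (Ioi 0) ≠ 0)
    (hode : ∀ q, 0 < q → ∀ t, 0 < t →
      HasDerivAt (fun u => laplaceExponent (ν u) q) (-Ψ (laplaceExponent (ν t) q)) t)
    (hodeInf : ∀ t, 0 < t →
      HasDerivAt (fun u => (ν u).real (Ioi 0)) (-Ψ ((ν t).real (Ioi 0))) t)
    {a lam : ℝ → ℝ} (hlam : ∀ t, 0 < t → 0 < lam t)
    {νhat : Measure ℝ} [IsFiniteMeasure νhat] (hνhat : νhat (Ioi 0) ≠ 0)
    (hlim : ∀ f : ℝ → ℝ, ContinuousOn f (Ioi 0) → (∃ M : ℝ, ∀ x ∈ Ioi (0 : ℝ), |f x| ≤ M) →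
      Tendsto (fun t => a t * ∫ x in Ioi (0 : ℝ), f (lam t * x) ∂(ν t)) atTop
        (𝓝 (∫ x in Ioi (0 : ℝ), f x ∂νhat))) :
    ∃ ρ : ℝ, 0 < ρ ∧ ρ ≤ 1 ∧
      ∀ t : ℝ, 0 < t → ∃ L : ℝ → ℝ,
        (∀ᶠ x in atTop, 0 < L x) ∧
        (∀ c : ℝ, 0 < c → Tendsto (fun x => L (c * x) / L x) atTop (𝓝 1)) ∧
        (∀ x : ℝ, 0 < x → ∫ y in Ioc (0 : ℝ) x, y ∂(ν t) = x ^ (1 - ρ) * L x) := by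
  have hmass : IsPositiveFlow Ψ fun t => (ν t).real (Ioi 0) := fun t ht =>
    have := hfin t ht
    ⟨ENNReal.toReal_pos (hnz t ht) (measure_ne_top _ _), hodeInf t ht⟩
  have hflow (q : ℝ) (hq : 0 < q) : IsPositiveFlow Ψ fun t => laplaceExponent (ν t) q :=
    fun t ht =>
    have := hfin t ht
    ⟨laplaceExponent_pos (hnz t ht) hq, hode q hq t ht⟩
  obtain ⟨ρ, hρ, hRV⟩ := exists_regularlyVarying_laplaceExponent hc hpos hγ hreg hfin hnz hmass
    hflow hνhat hlam fun q hq => tendsto_laplaceExponent_div_measureReal hνhat hlim (le_of_lt hq)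
  have := hfin 1 one_pos
  refine ⟨ρ, hρ, (hRV 1 one_pos).index_le_one_of_laplaceExponent (hnz 1 one_pos), fun t ht => ?_⟩
  have := hfin t ht
  exact exists_slowlyVarying_massDistribution (hnz t ht) hρ (hRV t ht)

/-- under the scaling-limit hypotheses for a critical branching
mechanism regularly varying at 0 with index `γ ∈ (1,2]`, there exists
`ρ ∈ (0,1]` such that for every `t > 0` the mass distribution function
`x ↦ ∫_{(0,x]} y ν_t(dy)` equals `x^{1-ρ} L(t,x)` with `L(t,·)` slowly
varying at infinity. -/
theorem mass_distribution_regularly_varying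
    (Ψ : ℝ → ℝ) (β : ℝ) (π : Measure ℝ)
    (hβ : 0 ≤ β)
    (hπfin : ∫⁻ x in Ioi (0:ℝ), ENNReal.ofReal (min x (x ^ 2)) ∂π < ⊤)
    (hΨ : ∀ u : ℝ, 0 < u →
      Ψ u = β * u ^ 2 + ∫ x in Ioi (0:ℝ), (Real.exp (-(u * x)) - 1 + u * x) ∂π)
    (γ : ℝ) (hγ : 1 < γ ∧ γ ≤ 2)
    (hreg : ∀ x : ℝ, 0 < x →
      Tendsto (fun t => Ψ (t * x) / Ψ t) (nhdsWithin 0 (Ioi 0)) (nhds (x ^ γ)))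
    (ν : ℝ → Measure ℝ)
    (hfin : ∀ t : ℝ, 0 < t → IsFiniteMeasure (ν t))
    (hnz : ∀ t : ℝ, 0 < t → ν t (Ioi 0) ≠ 0)
    (hconc : ∀ t : ℝ, 0 < t → ν t (Iic 0) = 0)
    (hode : ∀ q : ℝ, 0 < q → ∀ t : ℝ, 0 < t →
      HasDerivAt (fun u => ∫ x in Ioi (0:ℝ), (1 - Real.exp (-(q * x))) ∂(ν u))
        (-Ψ (∫ x in Ioi (0:ℝ), (1 - Real.exp (-(q * x))) ∂(ν t))) t)
    (hodeInf : ∀ t : ℝ, 0 < t →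
      HasDerivAt (fun u => ((ν u) (Ioi 0)).toReal) (-Ψ (((ν t) (Ioi 0)).toReal)) t)
    (a lam : ℝ → ℝ) (ha : ∀ t : ℝ, 0 < t → 0 < a t) (hlam : ∀ t : ℝ, 0 < t → 0 < lam t)
    (νhat : Measure ℝ) (hνhatfin : IsFiniteMeasure νhat)
    (hνhatnz : νhat (Ioi 0) ≠ 0) (hνhatc : νhat (Iic 0) = 0)
    (hlim : ∀ f : ℝ → ℝ, ContinuousOn f (Ioi 0) →
      (∃ M : ℝ, ∀ x ∈ Ioi (0:ℝ), |f x| ≤ M) →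
      Tendsto (fun t => a t * ∫ x in Ioi (0:ℝ), f (lam t * x) ∂(ν t)) atTop
        (nhds (∫ x in Ioi (0:ℝ), f x ∂νhat))) :
    ∃ ρ : ℝ, 0 < ρ ∧ ρ ≤ 1 ∧
      ∀ t : ℝ, 0 < t → ∃ L : ℝ → ℝ,
        (∀ᶠ x in atTop, 0 < L x) ∧
        (∀ c : ℝ, 0 < c → Tendsto (fun x => L (c * x) / L x) atTop (nhds 1)) ∧
        (∀ x : ℝ, 0 < x → ∫ y in Ioc (0:ℝ) x, y ∂(ν t) = x ^ (1 - ρ) * L x) := by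
  have hπ := integrableOn_min_sq hπfin
  have hnonneg (u : ℝ) (hu : 0 < u) : 0 ≤ Ψ u := hΨ u hu ▸ branchingMechanism_nonneg hβ u
  have hmono : MonotoneOn Ψ (Ioi 0) :=
    ((monotoneOn_branchingMechanism hπ hβ).mono Ioi_subset_Ici_self).congr
      fun u hu => (hΨ u hu).symm
  have hcont : ContinuousOn Ψ (Ioi 0) := (continuousOn_branchingMechanism hπ).congr hΨ
  have hpos (u : ℝ) (hu : 0 < u) : 0 < Ψ u :=
    RegularlyVarying.pos_of_monotoneOn hreg hmono hnonneg hu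
  exact mass_distribution_regularly_varying_general hcont hpos hγ.1 hreg hfin hnz hode hodeInf
    hlam hνhatnz hlim
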